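/- Let k ≥ 1, let Ω ⊂ ℝ^k be a bounded open set, let ε > 0, and let α > 2 be real. For a smooth function φ : ℝ × ℝ^k → ℝ with compact support contained in (0,ε) × Ω, define (H_α φ)(r,θ) = −∂_r²φ(r,θ) − r^{−α} Δ_θ φ(r,θ), where Δ_θ = Σ_{i=1}^k ∂²_{θ_i}. Then there exist constants c > 0 and B > 0, depending only on k, Ω, ε and α, such that for every such φ: ∫_{(0,ε)×Ω} (H_α φ)² dr dθ ≥ ∫_{(0,ε)×Ω} (∂_r² φ)² dr dθ + c ∫_{(0,ε)×Ω} r^{−2α} (Δ_θ φ)² dr dθ − B ∫_{(0,ε)×Ω} φ² dr dθ. -/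

import Mathlib

open MeasureTheory

/-- Second radial derivative `∂_r² φ` at `p = (r, θ)`. -/
noncomputable def radialD2 {k : ℕ} (φ : ℝ × (Fin k → ℝ) → ℝ) (p : ℝ × (Fin k → ℝ)) : ℝ :=
  iteratedDeriv 2 (fun s => φ (s, p.2)) p.1

/-- Angular Laplacian `Δ_θ φ = ∑_i ∂²_{θ_i} φ` at `p = (r, θ)`. -/
noncomputable def angularLaplacian {k : ℕ} (φ : ℝ × (Fin k → ℝ) → ℝ)
    (p : ℝ × (Fin k → ℝ)) : ℝ :=
  ∑ i : Fin k, iteratedDeriv 2 (fun u => φ (p.1, Function.update p.2 i u)) (p.2 i)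

/-- The model operator `H_α φ = −∂_r² φ − r^{−α} Δ_θ φ` with an irregular
singularity at `r = 0`. -/
noncomputable def modelOp {k : ℕ} (α : ℝ) (φ : ℝ × (Fin k → ℝ) → ℝ)
    (p : ℝ × (Fin k → ℝ)) : ℝ :=
  -radialD2 φ p - p.1 ^ (-α) * angularLaplacian φ p

namespace BE

abbrev E (k : ℕ) := ℝ × (Fin k → ℝ)

/-- directional derivative -/
noncomputable def D {k : ℕ} (v : E k) (f : E k → ℝ) : E k → ℝ := fun p => fderiv ℝ f p v

/-- smooth, compactly supported in `r > 0` -/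
structure S {k : ℕ} (f : E k → ℝ) : Prop where
  smooth : ContDiff ℝ (⊤ : ℕ∞) f
  cpt : HasCompactSupport f
  pos : ∀ p ∈ tsupport f, 0 < p.1

variable {k : ℕ}

lemma S.diff {f : E k → ℝ} (h : S f) : Differentiable ℝ f :=
  h.smooth.differentiable (by simp)

lemma D_tsupport (v : E k) (f : E k → ℝ) : tsupport (D v f) ⊆ tsupport f := by
  have := tsupport_fderiv_apply_subset ℝ (f := f) v
  exact this

lemma S.D {f : E k → ℝ} (h : S f) (v : E k) : S (D v f) := by
  refine ⟨?_, ?_, fun p hp => h.pos p (D_tsupport v f hp)⟩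
  · have : ContDiff ℝ (⊤ : ℕ∞) (fderiv ℝ f) := h.smooth.fderiv_right (by simp)
    exact this.clm_apply contDiff_const
  · exact HasCompactSupport.fderiv_apply ℝ h.cpt v

lemma S.mul {f g : E k → ℝ} (h : S f) (hg : ContDiff ℝ (⊤ : ℕ∞) g) :
    S (fun p => g p * f p) :=
  ⟨hg.mul h.smooth, h.cpt.mul_left, fun p hp => h.pos p (tsupport_mul_subset_right hp)⟩

lemma S.integrable {f : E k → ℝ} (h : S f) : Integrable f :=
  h.smooth.continuous.integrable_of_hasCompactSupport h.cpt

lemma S.eq_zero {f : E k → ℝ} (h : S f) {p : E k} (hp : ¬ 0 < p.1) : f p = 0 :=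
  image_eq_zero_of_notMem_tsupport fun hh => hp (h.pos p hh)

/-- weight -/
noncomputable def W (β : ℝ) (p : E k) : ℝ := p.1 ^ (-β)

lemma W_hasFDerivAt (β : ℝ) {p : E k} (hp : 0 < p.1) :
    HasFDerivAt (W (k := k) β) (((-β) * p.1 ^ (-β - 1)) • ContinuousLinearMap.fst ℝ ℝ (Fin k → ℝ)) p := by
  have := (hasFDerivAt_fst (𝕜 := ℝ) (p := p)).rpow_const (p := -β) (Or.inl hp.ne')
  exact this

lemma S.W {f : E k → ℝ} (h : S f) (β : ℝ) : S (fun p => W β p * f p) := by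
  refine ⟨?_, h.cpt.mul_left, fun p hp => h.pos p (tsupport_mul_subset_right hp)⟩
  rw [contDiff_iff_contDiffAt]
  intro p
  by_cases hp : 0 < p.1
  · refine ContDiffAt.mul ?_ h.smooth.contDiffAt
    exact contDiffAt_fst.rpow_const_of_ne hp.ne'
  · have : p ∉ tsupport f := fun hh => hp (h.pos p hh)
    have h0 := notMem_tsupport_iff_eventuallyEq.1 this
    have : (fun p => BE.W β p * f p) =ᶠ[nhds p] fun _ => 0 := by
      filter_upwards [h0] with q hq
      simp [hq]
    exact contDiffAt_const.congr_of_eventuallyEq this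

lemma D_mul {f g : E k → ℝ} (v : E k) (hf : Differentiable ℝ f) (hg : Differentiable ℝ g) (p : E k) :
    D v (fun p => f p * g p) p = f p * D v g p + D v f p * g p := by
  unfold D
  rw [fderiv_fun_mul (hf p) (hg p)]
  simp; ring

lemma D_W {f : E k → ℝ} (h : S f) (β : ℝ) (v : E k) (p : E k) :
    D v (fun p => W β p * f p) p = W β p * D v f p - β * v.1 * (W (β + 1) p * f p) := by
  by_cases hp : 0 < p.1
  · unfold D
    have := ((W_hasFDerivAt β hp).mul (h.diff p).hasFDerivAt).fderiv
    change fderiv ℝ (fun p => W β p * f p) p = _ at this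
    rw [this]
    simp only [add_apply, smul_apply, smul_eq_mul,
      ContinuousLinearMap.coe_fst']
    rw [show W (β + 1) p = p.1 ^ (-β - 1) by unfold W; congr 1; ring]
    ring
  · rw [((h.W β).D v).eq_zero hp, (h.D v).eq_zero hp, h.eq_zero hp]; simp

lemma integral_D {f : E k → ℝ} (h : S f) (v : E k) : ∫ p, D v f p = 0 := by
  have : (volume : Measure (E k)).IsAddHaarMeasure :=
    inferInstanceAs ((volume : Measure ℝ).prod (volume : Measure (Fin k → ℝ))).IsAddHaarMeasure
  have hi : Integrable (fun p => fderiv ℝ f p v) := (h.D v).integrable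
  have := integral_mul_fderiv_eq_neg_fderiv_mul_of_integrable (𝕜 := ℝ) (μ := (volume : Measure (E k)))
    (f := fun _ => (1:ℝ)) (g := f) (v := v) (by simp) (by simpa using hi)
    (by simpa using h.integrable) (fun x _ => by fun_prop) (fun x _ => h.diff x)
  simpa [D] using this

lemma D_comm {f : E k → ℝ} (h : S f) (v w : E k) (p : E k) : D v (D w f) p = D w (D v f) p := by
  have hs : IsSymmSndFDerivAt ℝ f p := by
    apply ContDiffAt.isSymmSndFDerivAt (n := (⊤ : ℕ∞)) h.smooth.contDiffAt
    simp only [minSmoothness_of_isRCLikeNormedField]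
    exact WithTop.coe_le_coe.2 (le_top : (2 : ℕ∞) ≤ ⊤)
  have hd : Differentiable ℝ (fderiv ℝ f) :=
    (h.smooth.fderiv_right (m := (⊤ : ℕ∞)) (by simp)).differentiable (by simp)
  have key : ∀ v w : E k, D v (D w f) p = fderiv ℝ (fderiv ℝ f) p v w := by
    intro v w
    have : HasFDerivAt (D w f) ((ContinuousLinearMap.apply ℝ ℝ w).comp (fderiv ℝ (fderiv ℝ f) p)) p :=
      (ContinuousLinearMap.apply ℝ ℝ w).hasFDerivAt.comp p (hd p).hasFDerivAt
    change fderiv ℝ (D w f) p v = _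
    rw [this.fderiv]; rfl
  rw [key, key]; exact hs v w

lemma D_comm' {f : E k → ℝ} (h : S f) (v w : E k) : D v (D w f) = D w (D v f) :=
  funext (D_comm h v w)

def e0 : E k := (1, 0)
noncomputable def e (i : Fin k) : E k := (0, Pi.single i 1)

lemma radialD2_eq {φ : E k → ℝ} (h : S φ) : radialD2 φ = D e0 (D e0 φ) := by
  have key : ∀ f : E k → ℝ, Differentiable ℝ f → ∀ θ s, deriv (fun s => f (s, θ)) s = D e0 f (s, θ) := by
    intro f hf θ s
    have h1 : HasDerivAt (fun s : ℝ => ((s, θ) : E k)) (1, 0) s :=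
      (hasDerivAt_id s).prodMk (hasDerivAt_const s θ)
    exact ((hf (s, θ)).hasFDerivAt.comp_hasDerivAt s h1).deriv
  funext p
  unfold radialD2
  rw [iteratedDeriv_succ, iteratedDeriv_one, funext (key φ h.diff p.2), key _ (h.D e0).diff]

lemma angular_eq {φ : E k → ℝ} (h : S φ) :
    angularLaplacian φ = fun p => ∑ i, D (e i) (D (e i) φ) p := by
  have key : ∀ f : E k → ℝ, Differentiable ℝ f → ∀ (i : Fin k) r θ s,
      deriv (fun u => f (r, Function.update θ i u)) s = D (e i) f (r, Function.update θ i s) := by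
    intro f hf i r θ s
    have h1 : HasDerivAt (fun u : ℝ => ((r, Function.update θ i u) : E k)) (0, Pi.single i 1) s :=
      (hasDerivAt_const s r).prodMk (hasDerivAt_update θ i s)
    exact ((hf (r, Function.update θ i s)).hasFDerivAt.comp_hasDerivAt s h1).deriv
  funext p
  unfold angularLaplacian
  refine Finset.sum_congr rfl fun i _ => ?_
  rw [iteratedDeriv_succ, iteratedDeriv_one, funext (key φ h.diff i p.1 p.2),
    key _ (h.D (e i)).diff]
  simp

lemma _root_.MeasureTheory.Integrable.intSub {f g : E k → ℝ} (hf : Integrable f)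
    (hg : Integrable g) : Integrable (fun p => f p - g p) := hf.sub hg

/-- cross term -/
lemma cross {φ : E k → ℝ} (h : S φ) (α : ℝ) (i : Fin k) :
    -(α * (α + 1) / 2) * ∫ p, W (α + 2) p * (D (e i) φ p * D (e i) φ p) ≤
      ∫ p, W α p * (D e0 (D e0 φ) p * D (e i) (D (e i) φ) p) := by
  set ψ := D (e i) φ with hψ
  have hS : S ψ := h.D _
  have s1 : S (fun p => D e0 (D e0 φ) p * ψ p) := hS.mul ((h.D e0).D e0).smooth
  have s2 : S (fun p => D e0 ψ p * ψ p) := hS.mul (hS.D e0).smooth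
  have s3 : S (fun p => ψ p * ψ p) := hS.mul hS.smooth
  have s4 : S (fun p => D e0 ψ p * D e0 ψ p) := (hS.D e0).mul (hS.D e0).smooth
  have hc : D (e i) (D e0 (D e0 φ)) = D e0 (D e0 ψ) := by
    rw [D_comm' (h.D e0), D_comm' h]
  have id : ∀ p, W α p * (D e0 (D e0 φ) p * D (e i) ψ p) =
      D (e i) (fun p => W α p * (D e0 (D e0 φ) p * ψ p)) p
      - D e0 (fun p => W α p * (D e0 ψ p * ψ p)) p
      - (α / 2) * D e0 (fun p => W (α + 1) p * (ψ p * ψ p)) p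
      + W α p * (D e0 ψ p * D e0 ψ p)
      - (α * (α + 1) / 2) * (W (α + 2) p * (ψ p * ψ p)) := by
    intro p
    rw [D_W s1, D_W s2, D_W s3, D_mul _ ((h.D e0).D e0).diff hS.diff, D_mul _ (hS.D e0).diff hS.diff,
      D_mul _ hS.diff hS.diff, hc, show α + 1 + 1 = α + 2 by ring]
    simp only [e0, e]
    ring
  simp_rw [id]
  have i1 := ((s1.W α).D (e i)).integrable
  have i2 := ((s2.W α).D e0).integrable
  have i3 := (((s3.W (α + 1)).D e0).integrable).const_mul (α / 2)
  have i4 := (s4.W α).integrable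
  have i5 := ((s3.W (α + 2)).integrable).const_mul (α * (α + 1) / 2)
  rw [integral_sub (((i1.intSub i2).intSub i3).fun_add i4) i5, integral_add ((i1.intSub i2).intSub i3) i4,
    integral_sub (i1.intSub i2) i3, integral_sub i1 i2, integral_const_mul, integral_const_mul,
    integral_D (s1.W α), integral_D (s2.W α), integral_D (s3.W _)]
  have : 0 ≤ ∫ p, W α p * (D e0 ψ p * D e0 ψ p) := by
    apply integral_nonneg
    intro p
    by_cases hp : 0 < p.1
    · exact mul_nonneg (Real.rpow_nonneg hp.le _) (mul_self_nonneg _)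
    · simp [(hS.D e0).eq_zero hp]
  linarith

/-- Green in one direction -/
lemma green {φ : E k → ℝ} (h : S φ) (β : ℝ) (i : Fin k) :
    ∫ p, W β p * (D (e i) φ p * D (e i) φ p) = - ∫ p, W β p * (φ p * D (e i) (D (e i) φ) p) := by
  have hS := h.D (e i)
  have s1 : S (fun p => φ p * D (e i) φ p) := hS.mul h.smooth
  have s2 : S (fun p => φ p * D (e i) (D (e i) φ) p) := (hS.D (e i)).mul h.smooth
  have id : ∀ p, W β p * (D (e i) φ p * D (e i) φ p) =
      D (e i) (fun p => W β p * (φ p * D (e i) φ p)) p - W β p * (φ p * D (e i) (D (e i) φ) p) := by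
    intro p
    rw [D_W s1, D_mul _ h.diff hS.diff]
    simp only [e]
    ring
  simp_rw [id]
  rw [integral_sub ((s1.W β).D (e i)).integrable (s2.W β).integrable, integral_D (s1.W β)]
  ring

lemma poincare {φ : E k → ℝ} (h : S φ) (β R : ℝ) (i : Fin k)
    (hR : ∀ p ∈ tsupport φ, |p.2 i| ≤ R) :
    ∫ p, W β p * (φ p * φ p) ≤ 4 * R ^ 2 * ∫ p, W β p * (D (e i) φ p * D (e i) φ p) := by
  have hS := h.D (e i)
  have s1 : S (fun p => φ p * φ p) := h.mul h.smooth
  have hx : ContDiff ℝ (⊤ : ℕ∞) (fun p : E k => p.2 i) := by fun_prop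
  have s2 : S (fun p => p.2 i * (φ p * φ p)) := s1.mul hx
  have s3 : S (fun p => D (e i) φ p * D (e i) φ p) := hS.mul hS.smooth
  have hDx : ∀ p, D (e i) (fun p : E k => p.2 i) p = 1 := by
    intro p
    have : HasFDerivAt (fun p : E k => p.2 i)
      ((ContinuousLinearMap.proj (R := ℝ) (φ := fun _ : Fin k => ℝ) i).comp (ContinuousLinearMap.snd ℝ ℝ (Fin k → ℝ))) p :=
      ((ContinuousLinearMap.proj (R := ℝ) (φ := fun _ : Fin k => ℝ) i).comp
        (ContinuousLinearMap.snd ℝ ℝ (Fin k → ℝ))).hasFDerivAt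
    unfold D
    rw [this.fderiv]
    simp [e]
  have le : ∀ p, (1/2) * (W β p * (φ p * φ p)) ≤
      D (e i) (fun p => W β p * (p.2 i * (φ p * φ p))) p
        + 2 * R ^ 2 * (W β p * (D (e i) φ p * D (e i) φ p)) := by
    intro p
    rw [D_W s2, D_mul _ (hx.differentiable (by simp)) s1.diff, D_mul _ h.diff h.diff, hDx]
    simp only [e, mul_zero, zero_mul, sub_zero]
    change _ ≤ W β p * (p.2 i * (φ p * D (e i) φ p + D (e i) φ p * φ p) + 1 * (φ p * φ p)) + 2 * R ^ 2 * (W β p * (D (e i) φ p * D (e i) φ p))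
    by_cases hp : p ∈ tsupport φ
    · have hw : 0 ≤ W β p := Real.rpow_nonneg (h.pos p hp).le _
      have h1 : (p.2 i) ^ 2 ≤ R ^ 2 := sq_le_sq' (by linarith [abs_le.1 (hR p hp)]) (abs_le.1 (hR p hp)).2
      have h2 : 0 ≤ (1/2) * (φ p + 2 * p.2 i * D (e i) φ p) ^ 2 := by positivity
      have h3 : (p.2 i) ^ 2 * (D (e i) φ p) ^ 2 ≤ R ^ 2 * (D (e i) φ p) ^ 2 :=
        mul_le_mul_of_nonneg_right h1 (sq_nonneg _)
      have h4 : 0 ≤ W β p * ((p.2 i * (φ p * D (e i) φ p + D (e i) φ p * φ p) + 1 * (φ p * φ p)) + 2 * R ^ 2 * (D (e i) φ p * D (e i) φ p) - (1/2) * (φ p * φ p)) :=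
        mul_nonneg hw (by nlinarith)
      nlinarith
    · have h0 : φ p = 0 := image_eq_zero_of_notMem_tsupport hp
      have h1 : D (e i) φ p = 0 := image_eq_zero_of_notMem_tsupport fun hh => hp (D_tsupport _ _ hh)
      simp [h0, h1]
  have i1 := ((s2.W β).D (e i)).integrable
  have i2 := ((s3.W β).integrable).const_mul (2 * R ^ 2)
  have := integral_mono (((s1.W β).integrable).const_mul (1/2)) (i1.fun_add i2) le
  rw [integral_add i1 i2, integral_D (s2.W β), integral_const_mul, integral_const_mul] at this
  linarith

lemma absorb (α δ : ℝ) (hα : 2 < α) (hδ : 0 < δ) :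
    ∃ B : ℝ, 0 < B ∧ ∀ r : ℝ, 0 < r → r ^ (-(4:ℝ)) ≤ δ * r ^ (-(2 * α)) + B := by
  have hpos : 0 < 2 * α - 4 := by linarith
  set r0 := δ ^ (1 / (2 * α - 4)) with hr0
  have hr0p : 0 < r0 := Real.rpow_pos_of_pos hδ _
  refine ⟨r0 ^ (-(4:ℝ)), Real.rpow_pos_of_pos hr0p _, fun r hr => ?_⟩
  rcases le_total r r0 with hle | hle
  · have h1 : r ^ (2 * α - 4) ≤ δ := by
      calc r ^ (2 * α - 4) ≤ r0 ^ (2 * α - 4) := Real.rpow_le_rpow hr.le hle hpos.le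
        _ = δ := by
          rw [hr0, ← Real.rpow_mul hδ.le, one_div, inv_mul_cancel₀ hpos.ne', Real.rpow_one]
    have h2 : r ^ (-(4:ℝ)) = r ^ (2 * α - 4) * r ^ (-(2 * α)) := by
      rw [← Real.rpow_add hr]; congr 1; ring
    rw [h2]
    have := mul_le_mul_of_nonneg_right h1 (Real.rpow_nonneg hr.le (-(2 * α)))
    have := Real.rpow_pos_of_pos hr0p (-(4:ℝ))
    linarith
  · have h1 := Real.rpow_le_rpow_of_nonpos hr0p hle (show -(4:ℝ) ≤ 0 by norm_num)
    have := mul_nonneg hδ.le (Real.rpow_nonneg hr.le (-(2 * α)))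
    linarith

lemma S.sum {ι : Type*} (s : Finset ι) {f : ι → E k → ℝ} (h : ∀ i, S (f i)) :
    S (fun p => ∑ i ∈ s, f i p) := by
  classical
  induction s using Finset.induction_on with
  | empty =>
    have : tsupport (fun _ : E k => (0:ℝ)) = ∅ := by
      rw [tsupport_eq_empty_iff]; rfl
    simp only [Finset.sum_empty]
    exact ⟨contDiff_const, HasCompactSupport.zero, by simp [this]⟩
  | insert a s ha ih =>
    simp only [Finset.sum_insert ha]
    refine ⟨(h a).smooth.add ih.smooth, (h a).cpt.add ih.cpt, fun p hp => ?_⟩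
    rcases tsupport_add (f a) _ hp with h1 | h1
    · exact (h a).pos p h1
    · exact ih.pos p h1

lemma W_mul (β γ : ℝ) {p : E k} (hp : 0 < p.1) : W (β + γ) p = W β p * W γ p := by
  unfold W
  rw [← Real.rpow_add hp]; congr 1; ring

lemma main {φ : E k → ℝ} (h : S φ) (α R δ B : ℝ) (hα : 2 < α) (i0 : Fin k) (hδ : 0 < δ)
    (hR : ∀ p ∈ tsupport φ, |p.2 i0| ≤ R)
    (hB : ∀ r : ℝ, 0 < r → r ^ (-(4:ℝ)) ≤ δ * r ^ (-(2 * α)) + B)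
    (hδR : (α * (α + 1)) ^ 2 * δ * (16 * R ^ 4) ≤ 1 / 4) :
    (∫ p, (radialD2 φ p) ^ 2)
      + (1/2) * (∫ p, p.1 ^ (-(2 * α)) * (angularLaplacian φ p) ^ 2)
      - ((α * (α + 1)) ^ 2 * B) * (∫ p, (φ p) ^ 2)
      ≤ ∫ p, (modelOp α φ p) ^ 2 := by
  set A := α * (α + 1) with hA
  set L := angularLaplacian φ with hL
  set T := radialD2 φ with hT
  have eL : L = fun p => ∑ i, D (e i) (D (e i) φ) p := angular_eq h
  have eT : T = D e0 (D e0 φ) := radialD2_eq h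
  have sL : S L := by rw [eL]; exact S.sum _ fun i => (h.D _).D _
  have sT : S T := by rw [eT]; exact (h.D _).D _
  have sTL : S (fun p => T p * L p) := sL.mul sT.smooth
  have sTT : S (fun p => T p * T p) := sT.mul sT.smooth
  have sLL : S (fun p => L p * L p) := sL.mul sL.smooth
  have sφL : S (fun p => φ p * L p) := sL.mul h.smooth
  have sφφ : S (fun p => φ p * φ p) := h.mul h.smooth
  -- sums of Green
  have hgreen : ∀ β, ∑ i, ∫ p, W β p * (D (e i) φ p * D (e i) φ p) = - ∫ p, W β p * (φ p * L p) := by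
    intro β
    simp_rw [green h β]
    rw [Finset.sum_neg_distrib, ← integral_finsetSum]
    · congr 2
      funext p
      rw [eL]
      simp only [Finset.mul_sum]
    · intro i _
      exact ((((h.D (e i)).D (e i)).mul h.smooth).W β).integrable
  have hcross : A / 2 * ∫ p, W (α + 2) p * (φ p * L p) ≤ ∫ p, W α p * (T p * L p) := by
    have h1 : ∫ p, W α p * (T p * L p) =
        ∑ i, ∫ p, W α p * (D e0 (D e0 φ) p * D (e i) (D (e i) φ) p) := by
      rw [← integral_finsetSum]
      · congr 1
        funext p
        rw [eL, eT]
        simp only [Finset.mul_sum]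
      · intro i _
        exact ((((h.D (e i)).D (e i)).mul ((h.D e0).D e0).smooth).W α).integrable
    rw [h1]
    have h2 := Finset.sum_le_sum fun i (_ : i ∈ Finset.univ) => cross h α i
    rw [← Finset.mul_sum, hgreen] at h2
    linarith
  -- Poincare
  have hP : ∫ p, W (2 * α) p * (φ p * φ p) ≤ 16 * R ^ 4 * ∫ p, W (2 * α) p * (L p * L p) := by
    have h1 := poincare h (2 * α) R i0 hR
    have h2 : ∫ p, W (2 * α) p * (D (e i0) φ p * D (e i0) φ p) ≤
        ∑ i, ∫ p, W (2 * α) p * (D (e i) φ p * D (e i) φ p) := by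
      apply Finset.single_le_sum
        (f := fun i => ∫ p, W (2 * α) p * (D (e i) φ p * D (e i) φ p)) _ (Finset.mem_univ i0)
      intro i _
      apply integral_nonneg
      intro p
      by_cases hp : 0 < p.1
      · exact mul_nonneg (Real.rpow_nonneg hp.le _) (mul_self_nonneg _)
      · simp [(h.D (e i)).eq_zero hp]
    rw [hgreen] at h2
    have h3 : ∫ p, (-(4 * R ^ 2)) * (W (2 * α) p * (φ p * L p)) ≤
        ∫ p, ((1/2) * (W (2 * α) p * (φ p * φ p)) + 8 * R ^ 4 * (W (2 * α) p * (L p * L p))) := by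
      apply integral_mono ((sφL.W _).integrable.const_mul _)
        (((sφφ.W _).integrable.const_mul _).fun_add ((sLL.W _).integrable.const_mul _))
      intro p
      dsimp only
      by_cases hp : 0 < p.1
      · have hw : 0 ≤ W (2 * α) p := Real.rpow_nonneg hp.le _
        have : 0 ≤ W (2 * α) p * ((1/2) * (φ p + 4 * R ^ 2 * L p) ^ 2) := by positivity
        nlinarith
      · simp [h.eq_zero hp, sL.eq_zero hp]
    rw [integral_add ((sφφ.W _).integrable.const_mul _) ((sLL.W _).integrable.const_mul _),
      integral_const_mul, integral_const_mul, integral_const_mul] at h3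
    have h4 := mul_le_mul_of_nonneg_left h2 (show 0 ≤ 4 * R ^ 2 by positivity)
    linarith
  -- Young + absorption
  have hY : ∫ p, (-A) * (W (α + 2) p * (φ p * L p)) ≤
      ∫ p, ((1/4) * (W (2 * α) p * (L p * L p)) + (A ^ 2 * δ) * (W (2 * α) p * (φ p * φ p))
        + (A ^ 2 * B) * (φ p * φ p)) := by
    apply integral_mono ((sφL.W _).integrable.const_mul _)
      ((((sLL.W _).integrable.const_mul _).fun_add ((sφφ.W _).integrable.const_mul _)).fun_add
        (sφφ.integrable.const_mul _))
    intro p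
    dsimp only
    by_cases hp : 0 < p.1
    · have e1 : W (2 * α) p = W α p * W α p := by rw [← W_mul α α hp]; congr 1; ring
      have e2 : W (α + 2) p = W α p * W 2 p := W_mul _ _ hp
      have e3 : W 4 p = W 2 p * W 2 p := by rw [← W_mul _ _ hp]; norm_num
      have h1 : W 4 p ≤ δ * W (2 * α) p + B := hB p.1 hp
      have h2 := mul_le_mul_of_nonneg_left h1 (show 0 ≤ A ^ 2 * (φ p * φ p) from
        mul_nonneg (sq_nonneg _) (mul_self_nonneg _))
      have h3 : -A * (W (α + 2) p * (φ p * L p)) ≤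
          (1/4) * (W (2 * α) p * (L p * L p)) + A ^ 2 * (φ p * φ p) * W 4 p := by
        rw [e1, e2, e3]
        nlinarith [sq_nonneg ((1/2) * (W α p * L p) + A * (W 2 p * φ p))]
      linarith
    · simp [h.eq_zero hp, sL.eq_zero hp]
  rw [integral_add (((sLL.W _).integrable.const_mul _).fun_add ((sφφ.W _).integrable.const_mul _))
    (sφφ.integrable.const_mul _), integral_add ((sLL.W _).integrable.const_mul _)
    ((sφφ.W _).integrable.const_mul _), integral_const_mul, integral_const_mul,
    integral_const_mul, integral_const_mul] at hY
  have hI : 0 ≤ ∫ p, W (2 * α) p * (L p * L p) := by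
    apply integral_nonneg
    intro p
    by_cases hp : 0 < p.1
    · exact mul_nonneg (Real.rpow_nonneg hp.le _) (mul_self_nonneg _)
    · simp [sL.eq_zero hp]
  -- expansion
  have hexp : ∫ p, (modelOp α φ p) ^ 2 =
      (∫ p, T p * T p) + 2 * (∫ p, W α p * (T p * L p)) + ∫ p, W (2 * α) p * (L p * L p) := by
    have : ∀ p, (modelOp α φ p) ^ 2 =
        T p * T p + 2 * (W α p * (T p * L p)) + W (2 * α) p * (L p * L p) := by
      intro p
      by_cases hp : 0 < p.1
      · have e1 : W (2 * α) p = W α p * W α p := by rw [← W_mul α α hp]; congr 1; ring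
        rw [e1]
        change (-T p - W α p * L p) ^ 2 = _
        ring
      · change (-T p - W α p * L p) ^ 2 = _
        rw [sT.eq_zero hp, sL.eq_zero hp]; ring
    simp_rw [this]
    rw [integral_add (sTT.integrable.fun_add ((sTL.W _).integrable.const_mul _)) (sLL.W _).integrable,
      integral_add sTT.integrable ((sTL.W _).integrable.const_mul _), integral_const_mul]
  rw [hexp]
  have r1 : ∫ p, (T p) ^ 2 = ∫ p, T p * T p := by simp_rw [sq]
  have r2 : ∫ p : E k, p.1 ^ (-(2 * α)) * (L p) ^ 2 = ∫ p, W (2 * α) p * (L p * L p) := by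
    simp_rw [sq]; rfl
  have r3 : ∫ p, (φ p) ^ 2 = ∫ p, φ p * φ p := by simp_rw [sq]
  rw [r1, r2, r3]
  have h5 := mul_le_mul_of_nonneg_left hP (show 0 ≤ A ^ 2 * δ by positivity)
  have h6 := mul_le_mul_of_nonneg_right hδR hI
  linarith

end BE

/-- **Basic Estimate for the model operator `H_α = −∂_r² − r^{−α} Δ_θ`, `α > 2`.**
There are constants `c, B > 0` such that for every smooth `φ` compactly supported
in `(0,ε) × Ω`:
`∫ (H_α φ)² ≥ ∫ (∂_r² φ)² + c ∫ r^{−2α} (Δ_θ φ)² − B ∫ φ²`. -/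
theorem basic_estimate
    (k : ℕ) (hk : 1 ≤ k) (Ω : Set (Fin k → ℝ)) (hΩopen : IsOpen Ω)
    (hΩbdd : Bornology.IsBounded Ω)
    (ε α : ℝ) (hε : 0 < ε) (hα : 2 < α) :
    ∃ c : ℝ, 0 < c ∧ ∃ B : ℝ, 0 < B ∧
      ∀ φ : ℝ × (Fin k → ℝ) → ℝ, ContDiff ℝ (⊤ : ℕ∞) φ → HasCompactSupport φ →
        tsupport φ ⊆ Set.Ioo 0 ε ×ˢ Ω →
        (∫ p in Set.Ioo (0 : ℝ) ε ×ˢ Ω, (radialD2 φ p) ^ 2)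
          + c * (∫ p in Set.Ioo (0 : ℝ) ε ×ˢ Ω, p.1 ^ (-(2 * α)) * (angularLaplacian φ p) ^ 2)
          - B * (∫ p in Set.Ioo (0 : ℝ) ε ×ˢ Ω, (φ p) ^ 2)
        ≤ ∫ p in Set.Ioo (0 : ℝ) ε ×ˢ Ω, (modelOp α φ p) ^ 2 := by
  obtain ⟨R, hRp, hR⟩ := hΩbdd.exists_pos_norm_le
  have hA : 0 < α * (α + 1) := by nlinarith
  set δ : ℝ := 1 / (4 * ((α * (α + 1)) ^ 2 * (16 * R ^ 4))) with hδ
  have hδp : 0 < δ := by positivity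
  obtain ⟨B, hBp, hB⟩ := BE.absorb α δ hα hδp
  refine ⟨1/2, by norm_num, (α * (α + 1)) ^ 2 * B, by positivity, fun φ h1 h2 h3 => ?_⟩
  have hS : BE.S φ := ⟨h1, h2, fun p hp => (h3 hp).1.1⟩
  have hT0 : ∀ p, p ∉ Set.Ioo (0 : ℝ) ε ×ˢ Ω → radialD2 φ p = 0 := by
    intro p hp
    rw [BE.radialD2_eq hS]
    exact image_eq_zero_of_notMem_tsupport fun hh =>
      hp (h3 (BE.D_tsupport _ _ (BE.D_tsupport _ _ hh)))
  have hL0 : ∀ p, p ∉ Set.Ioo (0 : ℝ) ε ×ˢ Ω → angularLaplacian φ p = 0 := by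
    intro p hp
    rw [BE.angular_eq hS]
    exact Finset.sum_eq_zero fun i _ => image_eq_zero_of_notMem_tsupport fun hh =>
      hp (h3 (BE.D_tsupport _ _ (BE.D_tsupport _ _ hh)))
  have hφ0 : ∀ p, p ∉ Set.Ioo (0 : ℝ) ε ×ˢ Ω → φ p = 0 := fun p hp =>
    image_eq_zero_of_notMem_tsupport fun hh => hp (h3 hh)
  rw [setIntegral_eq_integral_of_forall_compl_eq_zero fun p hp => by rw [hT0 p hp]; ring,
    setIntegral_eq_integral_of_forall_compl_eq_zero fun p hp => by rw [hL0 p hp]; ring,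
    setIntegral_eq_integral_of_forall_compl_eq_zero fun p hp => by rw [hφ0 p hp]; ring,
    setIntegral_eq_integral_of_forall_compl_eq_zero fun p hp => by
      rw [modelOp, hT0 p hp, hL0 p hp]; ring]
  refine BE.main hS α R δ B hα ⟨0, hk⟩ hδp (fun p hp => ?_) hB ?_
  · exact (norm_le_pi_norm p.2 _).trans (hR p.2 (h3 hp).2)
  · rw [hδ]
    apply le_of_eq
    field_simp
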